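/- For all ε > 0 and Δ > 0, V* = inf_{μ ∈ ⋃_{i≥3} 𝒫_i^{(d)}} V(μ), where 𝒫_i^{(d)} is the set of μ ∈ 𝒫_i^{(c)} whose density sequence satisfies, for some integer k with 1 ≤ k ≤ i−2: a_j = a₀ for all 0 ≤ j < k and a_j = a_{i−1} for all k < j ≤ i−1. (Lemma 9: the optimizing densities are two-valued staircase-shaped on each period.) -/

import Mathlib

open MeasureTheory Real Filter
open scoped ENNReal Topology

noncomputable section

/-- The ℓ¹ norm on ℝ². -/
def l1 (x : ℝ × ℝ) : ℝ := |x.1| + |x.2|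

/-- The ε-differential-privacy constraint on a measure on ℝ² with sensitivity Δ. -/
def DPC (ε Δ : ℝ) (μ : Measure (ℝ × ℝ)) : Prop :=
  ∀ S : Set (ℝ × ℝ), MeasurableSet S → ∀ t : ℝ × ℝ, l1 t ≤ Δ →
    μ S ≤ ENNReal.ofReal (Real.exp ε) * μ ((· + t) '' S)

/-- Expected ℓ¹ cost of a noise distribution. -/
def cost (μ : Measure (ℝ × ℝ)) : ℝ≥0∞ := ∫⁻ x, ENNReal.ofReal (l1 x) ∂μ

/-- The index k of the ℓ¹ layer A_i(k) = {x : kΔ/i ≤ ‖x‖₁ < (k+1)Δ/i} containing x. -/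
def layerIdx (Δ : ℝ) (i : ℕ) (x : ℝ × ℝ) : ℕ := ⌊l1 x * i / Δ⌋₊

/-- μ has a density w.r.t. Lebesgue measure which is constant on each ℓ¹ layer
A_i(k), with constant value a_k on A_i(k); (a_k) is the density sequence of μ. -/
def HasDensitySeq (Δ : ℝ) (i : ℕ) (μ : Measure (ℝ × ℝ)) (a : ℕ → ℝ≥0∞) : Prop :=
  μ = MeasureTheory.volume.withDensity (fun x => a (layerIdx Δ i x))

/-- Membership in 𝒫: probability measures satisfying the ε-DP constraint. -/
def MemP (ε Δ : ℝ) (μ : Measure (ℝ × ℝ)) : Prop :=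
  IsProbabilityMeasure μ ∧ DPC ε Δ μ

/-- Membership in 𝒫_{i,sym}: members of 𝒫 with layer-constant density. -/
def MemPsym (ε Δ : ℝ) (i : ℕ) (μ : Measure (ℝ × ℝ)) : Prop :=
  MemP ε Δ μ ∧ ∃ a : ℕ → ℝ≥0∞, HasDensitySeq Δ i μ a

/-- Membership in 𝒫_i^{(a)}: layer-constant density with nonincreasing density sequence. -/
def MemPa (ε Δ : ℝ) (i : ℕ) (μ : Measure (ℝ × ℝ)) : Prop :=
  MemP ε Δ μ ∧ ∃ a : ℕ → ℝ≥0∞, HasDensitySeq Δ i μ a ∧ Antitone a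

/-- Membership in 𝒫_i^{(b)}: additionally the density sequence decays geometrically,
a_k = e^ε · a_{k+i} for all k. -/
def MemPb (ε Δ : ℝ) (i : ℕ) (μ : Measure (ℝ × ℝ)) : Prop :=
  MemP ε Δ μ ∧ ∃ a : ℕ → ℝ≥0∞, HasDensitySeq Δ i μ a ∧ Antitone a ∧
    ∀ k : ℕ, a k = ENNReal.ofReal (Real.exp ε) * a (k + i)

/-- Membership in 𝒫_i^{(c)}: additionally a₀ = e^ε · a_{i−1} and
a₀ = a₁ = ⋯ = a_k for some 0 ≤ k ≤ i−2. -/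
def MemPc (ε Δ : ℝ) (i : ℕ) (μ : Measure (ℝ × ℝ)) : Prop :=
  MemP ε Δ μ ∧ ∃ a : ℕ → ℝ≥0∞, HasDensitySeq Δ i μ a ∧ Antitone a ∧
    (∀ k : ℕ, a k = ENNReal.ofReal (Real.exp ε) * a (k + i)) ∧
    a 0 = ENNReal.ofReal (Real.exp ε) * a (i - 1) ∧
    ∃ k : ℕ, k ≤ i - 2 ∧ ∀ j : ℕ, j ≤ k → a j = a 0

/-- Membership in 𝒫_i^{(d)}: members of 𝒫_i^{(c)} whose density sequence takes only
the two values a₀ and a_{i−1} on each period: for some 1 ≤ k ≤ i−2, a_j = a₀ for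
0 ≤ j < k and a_j = a_{i−1} for k < j ≤ i−1. -/
def MemPd (ε Δ : ℝ) (i : ℕ) (μ : Measure (ℝ × ℝ)) : Prop :=
  MemP ε Δ μ ∧ ∃ a : ℕ → ℝ≥0∞, HasDensitySeq Δ i μ a ∧ Antitone a ∧
    (∀ k : ℕ, a k = ENNReal.ofReal (Real.exp ε) * a (k + i)) ∧
    a 0 = ENNReal.ofReal (Real.exp ε) * a (i - 1) ∧
    (∃ k : ℕ, k ≤ i - 2 ∧ ∀ j : ℕ, j ≤ k → a j = a 0) ∧
    ∃ k : ℕ, 1 ≤ k ∧ k ≤ i - 2 ∧ (∀ j : ℕ, j < k → a j = a 0) ∧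
      ∀ j : ℕ, k < j → j ≤ i - 1 → a j = a (i - 1)

lemma lintegral_unfold (u : ℝ → ℝ≥0∞) (hu : Measurable u) :
    ∫⁻ r in Set.Ici (0:ℝ), u r = ∫⁻ x in Set.Ico (0:ℝ) 1, ∑' k : ℕ, u (x + k) := by
  have h1 : Set.Ici (0:ℝ) = ⋃ k : ℕ, Set.Ico (k:ℝ) (k+1) := by
    ext r
    simp only [Set.mem_Ici, Set.mem_iUnion, Set.mem_Ico]
    constructor
    · intro h
      exact ⟨⌊r⌋₊, Nat.floor_le h, Nat.lt_floor_add_one r⟩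
    · rintro ⟨k, hk, _⟩
      exact le_trans (Nat.cast_nonneg k) hk
  have hd : Pairwise (Function.onFun Disjoint (fun k : ℕ => Set.Ico (k:ℝ) (k+1))) := by
    intro i j hij
    rw [Function.onFun, Set.disjoint_left]
    rintro r ⟨h1, h2⟩ ⟨h3, h4⟩
    apply hij
    have a1 : (i:ℝ) < j + 1 := lt_of_le_of_lt h1 h4
    have a2 : (j:ℝ) < i + 1 := lt_of_le_of_lt h3 h2
    have a1' : i < j + 1 := by exact_mod_cast a1
    have a2' : j < i + 1 := by exact_mod_cast a2
    omega
  rw [h1, lintegral_iUnion (fun k => measurableSet_Ico) hd, lintegral_tsum]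
  · congr 1
    ext k
    have hp : MeasurePreserving (fun x : ℝ => x + (k:ℝ)) volume volume :=
      measurePreserving_add_right volume (k:ℝ)
    rw [← hp.setLIntegral_comp_preimage measurableSet_Ico hu]
    congr 2
    ext x; simp
  · intro k
    exact (hu.comp (measurable_id.add_const _)).aemeasurable

def gS0 (b : ℝ) : ℝ := ∑' k : ℕ, b ^ k
def gS1 (b : ℝ) : ℝ := ∑' k : ℕ, (k:ℝ) * b ^ k
def gS2 (b : ℝ) : ℝ := ∑' k : ℕ, (k:ℝ) ^ 2 * b ^ k
def gT1 (b x : ℝ) : ℝ := x * gS0 b + gS1 b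
def gT2 (b x : ℝ) : ℝ := x ^ 2 * gS0 b + 2 * x * gS1 b + gS2 b

lemma hasSum_S0 {b : ℝ} (hb0 : 0 < b) (hb1 : b < 1) : HasSum (fun k : ℕ => b ^ k) (gS0 b) :=
  (summable_geometric_of_lt_one hb0.le hb1).hasSum
lemma hasSum_S1 {b : ℝ} (hb0 : 0 < b) (hb1 : b < 1) :
    HasSum (fun k : ℕ => (k:ℝ) * b ^ k) (gS1 b) := by
  have := summable_pow_mul_geometric_of_norm_lt_one (r := b) 1
    (by rw [Real.norm_eq_abs, abs_of_pos hb0]; exact hb1)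
  simp only [pow_one] at this
  exact this.hasSum
lemma hasSum_S2 {b : ℝ} (hb0 : 0 < b) (hb1 : b < 1) :
    HasSum (fun k : ℕ => (k:ℝ) ^ 2 * b ^ k) (gS2 b) :=
  (summable_pow_mul_geometric_of_norm_lt_one (r := b) 2
    (by rw [Real.norm_eq_abs, abs_of_pos hb0]; exact hb1)).hasSum

lemma hasSum_T1 {b : ℝ} (hb0 : 0 < b) (hb1 : b < 1) (x : ℝ) :
    HasSum (fun k : ℕ => b ^ k * (x + k)) (gT1 b x) := by
  have := ((hasSum_S0 hb0 hb1).mul_left x).add (hasSum_S1 hb0 hb1)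
  have e : (fun k : ℕ => b ^ k * (x + k)) = fun k : ℕ => x * b ^ k + (k:ℝ) * b ^ k :=
    funext fun k => by ring
  rw [e]
  exact this

lemma hasSum_T2 {b : ℝ} (hb0 : 0 < b) (hb1 : b < 1) (x : ℝ) :
    HasSum (fun k : ℕ => b ^ k * (x + k) ^ 2) (gT2 b x) := by
  have := (((hasSum_S0 hb0 hb1).mul_left (x^2)).add
    ((hasSum_S1 hb0 hb1).mul_left (2*x))).add (hasSum_S2 hb0 hb1)
  have e : (fun k : ℕ => b ^ k * (x + k) ^ 2) =
      fun k : ℕ => x ^ 2 * b ^ k + 2 * x * ((k:ℝ) * b ^ k) + (k:ℝ) ^ 2 * b ^ k :=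
    funext fun k => by ring
  rw [e]
  exact this

lemma gS0_pos {b : ℝ} (hb0 : 0 < b) (hb1 : b < 1) : 0 < gS0 b :=
  (hasSum_S0 hb0 hb1).summable.tsum_pos (fun k => by positivity) 0 (by simp)

lemma gT1_nonneg {b : ℝ} (hb0 : 0 < b) (hb1 : b < 1) {x : ℝ} (hx : 0 ≤ x) : 0 ≤ gT1 b x :=
  (hasSum_T1 hb0 hb1 x).nonneg (fun k => by positivity)

lemma gT2_nonneg {b : ℝ} (hb0 : 0 < b) (hb1 : b < 1) {x : ℝ} (hx : 0 ≤ x) : 0 ≤ gT2 b x :=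
  (hasSum_T2 hb0 hb1 x).nonneg (fun k => by positivity)

lemma H_pos {b V x : ℝ} (hb0 : 0 < b) (hb1 : b < 1) (hV : 0 ≤ V) (hx : V ≤ x) :
    0 < gT2 b x - V * gT1 b x := by
  have h := (hasSum_T2 hb0 hb1 x).sub ((hasSum_T1 hb0 hb1 x).mul_left V)
  rw [← h.tsum_eq]
  have e : ∀ k : ℕ, b ^ k * (x + k) ^ 2 - V * (b ^ k * (x + k))
      = b ^ k * ((x + k) * (x + k - V)) := fun k => by ring
  have hx0 : 0 ≤ x := hV.trans hx
  refine h.summable.tsum_pos (fun k => ?_) 1 ?_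
  · rw [e]
    have : 0 ≤ x + k - V := by have : (0:ℝ) ≤ k := Nat.cast_nonneg k
                               linarith
    positivity
  · rw [e]
    have : 0 < x + (1:ℕ) - V := by push_cast; linarith
    positivity

/-- The set where the folded quadratic is negative is an interval. -/
lemma exists_interval {b V : ℝ} (hb0 : 0 < b) (hb1 : b < 1) (hV : 0 ≤ V) :
    ∃ α β : ℝ, 0 ≤ α ∧ α ≤ β ∧ β ≤ 1 ∧ α ≤ V ∧
      (∀ x, 0 ≤ x → x < 1 → x < α → 0 ≤ gT2 b x - V * gT1 b x) ∧
      (∀ x, 0 ≤ x → x < 1 → α ≤ x → x < β → gT2 b x - V * gT1 b x ≤ 0) ∧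
      (∀ x, 0 ≤ x → x < 1 → β ≤ x → 0 ≤ gT2 b x - V * gT1 b x) := by
  have hA := gS0_pos hb0 hb1
  set A := gS0 b with hAdef
  set B := 2 * gS1 b - V * gS0 b with hB
  set C := gS2 b - V * gS1 b with hC
  have hH : ∀ x, gT2 b x - V * gT1 b x = A * x ^ 2 + B * x + C := by
    intro x; simp only [gT1, gT2, hB, hC, hAdef]; ring
  by_cases hD : B ^ 2 - 4 * A * C < 0
  · have hp : ∀ x, 0 ≤ gT2 b x - V * gT1 b x := by
      intro x; rw [hH]
      have : 0 ≤ 4 * A * (A * x ^ 2 + B * x + C) := by nlinarith [sq_nonneg (2*A*x+B)]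
      by_contra hn
      push Not at hn
      nlinarith
    exact ⟨0, 0, le_refl _, le_refl _, zero_le_one, hV, fun x _ _ _ => hp x,
      fun x h0 _ h1 h2 => absurd h2 (not_lt.mpr h1), fun x _ _ _ => hp x⟩
  · push Not at hD
    set q := Real.sqrt (B ^ 2 - 4 * A * C) with hq
    have hq0 : 0 ≤ q := Real.sqrt_nonneg _
    have hq2 : q ^ 2 = B ^ 2 - 4 * A * C := Real.sq_sqrt hD
    set r1 := (-B - q) / (2 * A) with hr1
    set r2 := (-B + q) / (2 * A) with hr2
    have h12 : r1 ≤ r2 := by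
      rw [hr1, hr2]; gcongr; linarith
    have hf : ∀ x, gT2 b x - V * gT1 b x = A * ((x - r1) * (x - r2)) := by
      intro x
      rw [hH, hr1, hr2]
      field_simp
      nlinarith [hq2]
    have hr1V : r1 ≤ V := by
      by_contra hn
      push Not at hn
      have := H_pos hb0 hb1 hV hn.le
      rw [hf] at this
      simp at this
    refine ⟨max 0 (min 1 r1), max 0 (min 1 r2), le_max_left _ _, ?_, ?_, ?_, ?_, ?_, ?_⟩
    · gcongr
    · exact max_le zero_le_one (min_le_left _ _)
    · exact max_le hV ((min_le_right _ _).trans hr1V)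
    · intro x h0 h1 h
      rw [hf]
      have hx : x < r1 := by
        rcases lt_max_iff.mp h with h | h
        · linarith
        · exact (lt_min_iff.mp h).2
      have : 0 ≤ (x - r1) * (x - r2) := mul_nonneg_of_nonpos_of_nonpos (by linarith) (by linarith)
      positivity
    · intro x h0 h1 h h'
      rw [hf]
      have hx : r1 ≤ x := by
        rcases min_le_iff.mp (max_le_iff.mp h).2 with h | h
        · linarith
        · exact h
      have hx2 : x < r2 := by
        rcases lt_max_iff.mp h' with h | h
        · linarith
        · exact (lt_min_iff.mp h).2
      have : (x - r1) * (x - r2) ≤ 0 := mul_nonpos_of_nonneg_of_nonpos (by linarith) (by linarith)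
      exact mul_nonpos_of_nonneg_of_nonpos hA.le this
    · intro x h0 h1 h
      rw [hf]
      have hx : r2 ≤ x := by
        rcases min_le_iff.mp (max_le_iff.mp h).2 with h | h
        · linarith
        · exact h
      have : 0 ≤ (x - r1) * (x - r2) := mul_nonneg (by linarith) (by linarith)
      positivity

def gs (b γ x : ℝ) : ℝ := if x < γ then 1 else b

lemma gs_nonneg {b : ℝ} (hb0 : 0 < b) (γ x : ℝ) : 0 ≤ gs b γ x := by
  unfold gs; split_ifs <;> linarith

lemma gs_le_one {b : ℝ} (hb1 : b < 1) (γ x : ℝ) : gs b γ x ≤ 1 := by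
  unfold gs; split_ifs <;> linarith

lemma measurable_gs (b γ : ℝ) : Measurable (gs b γ) :=
  Measurable.ite measurableSet_Iio measurable_const measurable_const

lemma continuous_gT1 (b : ℝ) : Continuous (gT1 b) := by unfold gT1; fun_prop
lemma continuous_gT2 (b : ℝ) : Continuous (gT2 b) := by unfold gT2; fun_prop

lemma iter_le {b : ℝ} (hb0 : 0 < b) {g : ℝ → ℝ}
    (hc : ∀ r s, 0 ≤ r → 0 ≤ s → |r - s| ≤ 1 → b * g r ≤ g s) (j : ℕ) :
    ∀ r, 0 ≤ r → b ^ j * g r ≤ g (r + j) := by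
  induction j with
  | zero => intro r _; simp
  | succ n ih =>
    intro r hr
    have h1 := ih r hr
    have h2 := hc (r + n) (r + (n+1:ℕ)) (by positivity) (by positivity)
      (by push_cast; rw [show r + (n:ℝ) - (r + (n+1)) = -1 by ring]; simp)
    calc b ^ (n+1) * g r = b * (b ^ n * g r) := by ring
      _ ≤ b * g (r + n) := by gcongr
      _ ≤ _ := h2

/-- One residue class, first comparison: `g` against its geometric extension. -/
lemma residue_one {b V x G : ℝ} (hb0 : 0 < b) (hb1 : b < 1) (hV : 0 ≤ V) (hx : 0 ≤ x)
    (hG : 0 ≤ G) {g : ℝ → ℝ} (hg0 : ∀ r, 0 ≤ g r)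
    (hk : ∀ k : ℕ, 0 ≤ (x + k - V) * (g (x + k) - b ^ k * G)) :
    ENNReal.ofReal V * ∑' k : ℕ, ENNReal.ofReal ((x + k) * g (x + k))
        + ENNReal.ofReal (G * gT2 b x)
      ≤ ∑' k : ℕ, ENNReal.ofReal ((x + k) ^ 2 * g (x + k))
        + ENNReal.ofReal (G * (V * gT1 b x)) := by
  have e1 : ENNReal.ofReal (G * gT2 b x)
      = ∑' k : ℕ, ENNReal.ofReal (G * (b ^ k * (x + k) ^ 2)) := by
    have h := (hasSum_T2 hb0 hb1 x).mul_left G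
    rw [← h.tsum_eq, ENNReal.ofReal_tsum_of_nonneg (fun k => by positivity) h.summable]
  have e2 : ENNReal.ofReal (G * (V * gT1 b x))
      = ∑' k : ℕ, ENNReal.ofReal (G * (V * (b ^ k * (x + k)))) := by
    have h := ((hasSum_T1 hb0 hb1 x).mul_left V).mul_left G
    rw [← h.tsum_eq, ENNReal.ofReal_tsum_of_nonneg (fun k => by positivity) h.summable]
  rw [e1, e2, ← ENNReal.tsum_mul_left, ← ENNReal.tsum_add, ← ENNReal.tsum_add]
  refine ENNReal.tsum_le_tsum fun k => ?_
  have hgk := hg0 (x + k)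
  rw [← ENNReal.ofReal_mul hV, ← ENNReal.ofReal_add (by positivity) (by positivity),
    ← ENNReal.ofReal_add (by positivity) (by positivity)]
  apply ENNReal.ofReal_le_ofReal
  have hxk : 0 ≤ x + k := by positivity
  nlinarith [mul_nonneg hxk (hk k)]

/-- One residue class, both comparisons. -/
lemma residue_two {b V x G D : ℝ} (hb0 : 0 < b) (hb1 : b < 1) (hV : 0 ≤ V) (hx : 0 ≤ x)
    (hG : 0 ≤ G) (hD : 0 ≤ D) {g : ℝ → ℝ} (hg0 : ∀ r, 0 ≤ g r)
    (hk : ∀ k : ℕ, 0 ≤ (x + k - V) * (g (x + k) - b ^ k * G))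
    (hGD : 0 ≤ (G - D) * (gT2 b x - V * gT1 b x)) :
    ENNReal.ofReal V * ∑' k : ℕ, ENNReal.ofReal ((x + k) * g (x + k))
        + ENNReal.ofReal (D * gT2 b x)
      ≤ ∑' k : ℕ, ENNReal.ofReal ((x + k) ^ 2 * g (x + k))
        + ENNReal.ofReal (D * (V * gT1 b x)) := by
  have h1 := residue_one hb0 hb1 hV hx hG hg0 hk
  have t1 := gT1_nonneg hb0 hb1 hx
  have t2 := gT2_nonneg hb0 hb1 hx
  have h2 : ENNReal.ofReal (G * (V * gT1 b x)) + ENNReal.ofReal (D * gT2 b x)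
      ≤ ENNReal.ofReal (D * (V * gT1 b x)) + ENNReal.ofReal (G * gT2 b x) := by
    rw [← ENNReal.ofReal_add (by positivity) (by positivity),
      ← ENNReal.ofReal_add (by positivity) (by positivity)]
    apply ENNReal.ofReal_le_ofReal
    nlinarith
  refine (ENNReal.add_le_add_iff_right (ENNReal.ofReal_ne_top (r := G * gT2 b x))).mp ?_
  calc _ = (ENNReal.ofReal V * ∑' k : ℕ, ENNReal.ofReal ((x + k) * g (x + k))
        + ENNReal.ofReal (G * gT2 b x)) + ENNReal.ofReal (D * gT2 b x) := by ring
    _ ≤ (∑' k : ℕ, ENNReal.ofReal ((x + k) ^ 2 * g (x + k))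
        + ENNReal.ofReal (G * (V * gT1 b x))) + ENNReal.ofReal (D * gT2 b x) := by gcongr
    _ = ∑' k : ℕ, ENNReal.ofReal ((x + k) ^ 2 * g (x + k)) +
        (ENNReal.ofReal (G * (V * gT1 b x)) + ENNReal.ofReal (D * gT2 b x)) := by ring
    _ ≤ ∑' k : ℕ, ENNReal.ofReal ((x + k) ^ 2 * g (x + k)) +
        (ENNReal.ofReal (D * (V * gT1 b x)) + ENNReal.ofReal (G * gT2 b x)) := by gcongr
    _ = _ := by ring

/-- The one-dimensional inequality. -/
lemma ray_ineq {b V : ℝ} (hb0 : 0 < b) (hb1 : b < 1) (hV : 0 ≤ V)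
    (hst : ∀ γ, 0 ≤ γ → γ ≤ 1 →
      ∫⁻ x in Set.Ico (0:ℝ) 1, ENNReal.ofReal (gs b γ x * (V * gT1 b x))
        ≤ ∫⁻ x in Set.Ico (0:ℝ) 1, ENNReal.ofReal (gs b γ x * gT2 b x))
    {g : ℝ → ℝ} (hg : Measurable g) (hg0 : ∀ r, 0 ≤ g r)
    (hc : ∀ r s, 0 ≤ r → 0 ≤ s → |r - s| ≤ 1 → b * g r ≤ g s) :
    ENNReal.ofReal V * ∫⁻ r in Set.Ici (0:ℝ), ENNReal.ofReal (r * g r)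
      ≤ ∫⁻ r in Set.Ici (0:ℝ), ENNReal.ofReal (r ^ 2 * g r) := by
  obtain ⟨α, β, hα0, hαβ, hβ1, hαV, hH1, hH2, hH3⟩ := exists_interval hb0 hb1 hV
  set N := ⌊V - α⌋₊ with hN
  have hN1 : (N:ℝ) + α ≤ V := by have := Nat.floor_le (sub_nonneg.mpr hαV); linarith
  have hN2 : V < N + α + 1 := by have := Nat.lt_floor_add_one (V - α); linarith
  -- supremum over the window
  obtain ⟨c, hcl, hcu⟩ : ∃ c, (∀ r, N + α ≤ r → r ≤ N + α + 1 → g r ≤ c) ∧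
      (∀ r, N + α ≤ r → r ≤ N + α + 1 → b * c ≤ g r) := by
    have hw : (0:ℝ) ≤ N + α := by positivity
    have key : ∀ r s, N + α ≤ r → r ≤ N + α + 1 → N + α ≤ s → s ≤ N + α + 1 →
        g r ≤ g s / b := by
      intro r s h1 h2 h3 h4
      rw [le_div_iff₀ hb0, mul_comm]
      exact hc r s (by linarith) (by linarith) (abs_le.mpr ⟨by linarith, by linarith⟩)
    refine ⟨sSup (g '' Set.Icc (N + α) (N + α + 1)), ?_, ?_⟩
    · intro r h1 h2
      refine le_csSup ⟨g (N + α) / b, ?_⟩ ⟨r, ⟨h1, h2⟩, rfl⟩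
      rintro _ ⟨s, ⟨h3, h4⟩, rfl⟩
      exact key _ _ h3 h4 le_rfl (by linarith)
    · intro r h1 h2
      rw [mul_comm, ← le_div_iff₀ hb0]
      refine csSup_le ⟨_, ⟨N + α, ⟨le_rfl, by linarith⟩, rfl⟩⟩ ?_
      rintro _ ⟨s, ⟨h3, h4⟩, rfl⟩
      exact key _ _ h3 h4 h1 h2
  have hc0 : 0 ≤ c := (hg0 _).trans (hcl (N + α) le_rfl (by linarith))
  set C := c / b ^ N with hCdef
  have hC0 : 0 ≤ C := by positivity
  have hpt : ∀ x ∈ Set.Ico (0:ℝ) 1,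
      ENNReal.ofReal V * ∑' k : ℕ, ENNReal.ofReal ((x + k) * g (x + k))
        + ENNReal.ofReal (C * gs b β x * gT2 b x)
      ≤ ∑' k : ℕ, ENNReal.ofReal ((x + k) ^ 2 * g (x + k))
        + ENNReal.ofReal (C * gs b β x * (V * gT1 b x)) := by
    rintro x ⟨hx0, hx1⟩
    obtain ⟨m, hm1, hm2, hmc⟩ : ∃ m : ℕ, N + α ≤ x + m ∧ x + m < N + α + 1 ∧
        0 ≤ (g (x + m) / b ^ m - C * gs b β x) * (gT2 b x - V * gT1 b x) := by
      by_cases hxα : x < α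
      · have w1 : N + α ≤ x + (N+1:ℕ) := by push_cast; linarith
        have w2 : x + (N+1:ℕ) < N + α + 1 := by push_cast; linarith
        refine ⟨N+1, w1, w2, mul_nonneg ?_ (hH1 x hx0 hx1 hxα)⟩
        have := hcu _ w1 w2.le
        rw [gs, if_pos (by linarith), hCdef, mul_one, sub_nonneg, div_le_div_iff₀ (by positivity) (by positivity), pow_succ]
        have hbN : 0 < b ^ N := by positivity
        nlinarith
      · push Not at hxα
        have w1 : N + α ≤ x + (N:ℕ) := by linarith
        have w2 : x + (N:ℕ) < N + α + 1 := by linarith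
        refine ⟨N, w1, w2, ?_⟩
        by_cases hxβ : x < β
        · refine mul_nonneg_of_nonpos_of_nonpos ?_ (hH2 x hx0 hx1 hxα hxβ)
          rw [gs, if_pos hxβ, hCdef, mul_one, sub_nonpos]
          have := hcl _ w1 w2.le
          gcongr
        · push Not at hxβ
          refine mul_nonneg ?_ (hH3 x hx0 hx1 hxβ)
          rw [gs, if_neg (not_lt.mpr hxβ), hCdef, sub_nonneg]
          have := hcu _ w1 w2.le
          rw [div_mul_eq_mul_div]
          gcongr
          linarith
    refine residue_two hb0 hb1 hV hx0 (G := g (x + m) / b ^ m)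
      (div_nonneg (hg0 _) (by positivity)) (mul_nonneg hC0 (gs_nonneg hb0 _ _)) hg0 ?_ hmc
    intro k
    rcases lt_trichotomy k m with h | h | h
    · obtain ⟨j, rfl⟩ := Nat.exists_eq_add_of_lt h
      have h1 := iter_le hb0 hc (j+1) (x + k) (by positivity)
      apply mul_nonneg_of_nonpos_of_nonpos
      · push_cast at hm2
        have : (0:ℝ) ≤ j := Nat.cast_nonneg j
        linarith
      · have e : x + ((k + j + 1 : ℕ):ℝ) = x + k + ((j+1:ℕ):ℝ) := by push_cast; ring
        rw [e, sub_nonpos, show k + j + 1 = k + (j+1) by ring, pow_add]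
        have hbk : 0 < b ^ k := by positivity
        have hbj : 0 < b ^ (j+1) := by positivity
        rw [mul_div_mul_left _ _ hbk.ne' |> fun h => (mul_div_assoc _ _ _).symm.trans h,
          le_div_iff₀ hbj, mul_comm]
        exact h1
    · subst h
      have hbk : b ^ k ≠ 0 := by positivity
      rw [mul_div_cancel₀ _ hbk]
      simp
    · obtain ⟨j, rfl⟩ := Nat.exists_eq_add_of_lt h
      have h1 := iter_le hb0 hc (j+1) (x + m) (by positivity)
      apply mul_nonneg
      · push_cast
        have : (0:ℝ) ≤ j := Nat.cast_nonneg j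
        linarith
      · have e : x + ((m + j + 1 : ℕ):ℝ) = x + m + ((j+1:ℕ):ℝ) := by push_cast; ring
        rw [e, sub_nonneg, show m + j + 1 = m + (j+1) by ring, pow_add]
        have hbk : b ^ m ≠ 0 := by positivity
        rw [show b ^ m * b ^ (j+1) * (g (x + m) / b ^ m) = b ^ (j+1) * g (x + m) by field_simp]
        exact h1
  -- integrate
  have hm1 : Measurable (fun r => ENNReal.ofReal (r * g r)) := by fun_prop
  have hm2 : Measurable (fun r => ENNReal.ofReal (r ^ 2 * g r)) := by fun_prop
  rw [lintegral_unfold _ hm1, lintegral_unfold _ hm2]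
  have hgs := measurable_gs b β
  have hT1 := (continuous_gT1 b).measurable
  have hT2 := (continuous_gT2 b).measurable
  have hst' := hst β (hα0.trans hαβ) hβ1
  have hs1 : ∫⁻ x in Set.Ico (0:ℝ) 1, ENNReal.ofReal (C * gs b β x * (V * gT1 b x)) ≤
      ∫⁻ x in Set.Ico (0:ℝ) 1, ENNReal.ofReal (C * gs b β x * gT2 b x) := by
    simp only [mul_assoc C, ENNReal.ofReal_mul hC0]
    rw [lintegral_const_mul _ (by fun_prop), lintegral_const_mul _ (by fun_prop)]
    gcongr
  have hfin : ∫⁻ x in Set.Ico (0:ℝ) 1, ENNReal.ofReal (C * gs b β x * gT2 b x) ≠ ⊤ := by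
    have hbd : ∫⁻ x in Set.Ico (0:ℝ) 1, ENNReal.ofReal (C * gs b β x * gT2 b x) ≤
        ∫⁻ x in Set.Ico (0:ℝ) 1, ENNReal.ofReal (C * gT2 b 1) := by
      refine setLIntegral_mono measurable_const fun x hx => ?_
      apply ENNReal.ofReal_le_ofReal
      have t2 := gT2_nonneg hb0 hb1 hx.1
      have t21 : gT2 b x ≤ gT2 b 1 := by
        refine hasSum_le (fun k => ?_) (hasSum_T2 hb0 hb1 x) (hasSum_T2 hb0 hb1 1)
        have := hx.1
        have := hx.2.le
        gcongr
      have := gs_le_one hb1 β x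
      have := gs_nonneg hb0 β x
      calc C * gs b β x * gT2 b x ≤ C * 1 * gT2 b 1 := by gcongr
        _ = _ := by ring
    refine ne_top_of_le_ne_top ?_ hbd
    rw [setLIntegral_const]
    simp
  refine (ENNReal.add_le_add_iff_right hfin).mp ?_
  rw [← lintegral_const_mul' _ _ ENNReal.ofReal_ne_top, ← lintegral_add_right _ (by fun_prop)]
  calc _ ≤ ∫⁻ x in Set.Ico (0:ℝ) 1, (∑' k : ℕ, ENNReal.ofReal ((x + k) ^ 2 * g (x + k))
        + ENNReal.ofReal (C * gs b β x * (V * gT1 b x))) :=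
        setLIntegral_mono' measurableSet_Ico hpt
    _ = _ := lintegral_add_right _ (by fun_prop)
    _ ≤ _ := by gcongr

lemma lintegral_scale {a : ℝ} (ha : 0 < a) (u : ℝ → ℝ≥0∞) (hu : Measurable u) :
    ∫⁻ r in Set.Ioi (0:ℝ), u r = ENNReal.ofReal a * ∫⁻ r in Set.Ici (0:ℝ), u (a * r) := by
  rw [setLIntegral_congr (Ioi_ae_eq_Ici (μ := volume) (a := (0:ℝ)))]
  have h := Real.smul_map_volume_mul_left ha.ne'
  rw [abs_of_pos ha] at h
  have hm : Measurable (fun x : ℝ => a * x) := measurable_const_mul a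
  conv_lhs => rw [← h]
  rw [Measure.restrict_smul, lintegral_smul_measure,
    setLIntegral_map measurableSet_Ici hu hm, smul_eq_mul]
  congr 3
  ext x
  simp [ha]

def wt (θ : ℝ) : ℝ := |Real.cos θ| + |Real.sin θ|

lemma wt_ge_one (θ : ℝ) : 1 ≤ wt θ := by
  unfold wt
  have h := Real.cos_sq_add_sin_sq θ
  have h1 : |Real.cos θ| ^ 2 + |Real.sin θ| ^ 2 = 1 := by rw [sq_abs, sq_abs]; exact h
  have := Real.abs_cos_le_one θ
  have := Real.abs_sin_le_one θ
  have := abs_nonneg (Real.cos θ)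
  have := abs_nonneg (Real.sin θ)
  nlinarith

lemma wt_le_two (θ : ℝ) : wt θ ≤ 2 := by
  unfold wt
  have := Real.abs_cos_le_one θ
  have := Real.abs_sin_le_one θ
  linarith

lemma continuous_wt : Continuous wt := by unfold wt; fun_prop

/-- The point of the ℓ¹ sphere of radius `Δ` in direction `θ`. -/
def dirv (Δ θ : ℝ) : ℝ × ℝ := (Δ / wt θ * Real.cos θ, Δ / wt θ * Real.sin θ)

lemma l1_smul (r : ℝ) (x : ℝ × ℝ) : l1 (r • x) = |r| * l1 x := by
  simp [l1, abs_mul, mul_add]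

lemma l1_nonneg (x : ℝ × ℝ) : 0 ≤ l1 x := by unfold l1; positivity

lemma l1_add (x y : ℝ × ℝ) : l1 (x + y) ≤ l1 x + l1 y := by
  have h1 := abs_add_le x.1 y.1
  have h2 := abs_add_le x.2 y.2
  simp only [l1, Prod.fst_add, Prod.snd_add]
  linarith

lemma continuous_l1 : Continuous l1 := by unfold l1; fun_prop

lemma l1_dirv {Δ : ℝ} (hΔ : 0 < Δ) (θ : ℝ) : l1 (dirv Δ θ) = Δ := by
  have hw : 0 < wt θ := lt_of_lt_of_le one_pos (wt_ge_one θ)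
  have : l1 (dirv Δ θ) = Δ / wt θ * wt θ := by
    simp only [l1, dirv, abs_mul, abs_of_pos (div_pos hΔ hw)]
    rw [← mul_add]; rfl
  rw [this]; field_simp

lemma measurable_dirv (Δ : ℝ) : Measurable (dirv Δ) := by
  have := continuous_wt.measurable
  unfold dirv; fun_prop

lemma polar_l1 {Δ : ℝ} (hΔ : 0 < Δ) (F : ℝ × ℝ → ℝ≥0∞) (hF : Measurable F) :
    ∫⁻ x, F x = ∫⁻ θ in Set.Ioo (-π) π, ENNReal.ofReal ((Δ / wt θ) ^ 2) *
      ∫⁻ r in Set.Ici (0:ℝ), ENNReal.ofReal r * F (r • dirv Δ θ) := by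
  rw [← lintegral_comp_polarCoord_symm]
  have ht : polarCoord.target = Set.Ioi (0:ℝ) ×ˢ Set.Ioo (-π) π := rfl
  have hs : ∀ p : ℝ × ℝ, polarCoord.symm p = (p.1 * Real.cos p.2, p.1 * Real.sin p.2) :=
    fun p => rfl
  simp only [hs, ht, smul_eq_mul]
  rw [Measure.volume_eq_prod, ← Measure.prod_restrict, lintegral_prod_symm]
  · refine lintegral_congr fun θ => ?_
    have hw : 0 < wt θ := lt_of_lt_of_le one_pos (wt_ge_one θ)
    have ha : 0 < Δ / wt θ := by positivity
    rw [lintegral_scale ha _ (by fun_prop), pow_two, ENNReal.ofReal_mul ha.le, mul_assoc]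
    congr 1
    rw [← lintegral_const_mul' _ _ ENNReal.ofReal_ne_top]
    refine lintegral_congr fun r => ?_
    rw [← mul_assoc, ENNReal.ofReal_mul ha.le]
    congr 2
    simp only [dirv, Prod.smul_mk, smul_eq_mul, Prod.mk.injEq]
    constructor <;> ring
  · fun_prop

def angK (Δ : ℝ) : ℝ≥0∞ := ∫⁻ θ in Set.Ioo (-π) π, ENNReal.ofReal ((Δ / wt θ) ^ 2)

lemma angK_ne_top {Δ : ℝ} (hΔ : 0 < Δ) : angK Δ ≠ ⊤ := by
  have h : angK Δ ≤ ∫⁻ θ in Set.Ioo (-π) π, ENNReal.ofReal (Δ ^ 2) := by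
    refine setLIntegral_mono measurable_const fun θ _ => ENNReal.ofReal_le_ofReal ?_
    have hw := wt_ge_one θ
    have : Δ / wt θ ≤ Δ := div_le_self hΔ.le hw
    have : 0 ≤ Δ / wt θ := by positivity
    gcongr
  refine ne_top_of_le_ne_top ?_ h
  rw [setLIntegral_const, Real.volume_Ioo]
  exact ENNReal.mul_ne_top ENNReal.ofReal_ne_top ENNReal.ofReal_ne_top

lemma angK_ne_zero {Δ : ℝ} (hΔ : 0 < Δ) : angK Δ ≠ 0 := by
  have h : ∫⁻ θ in Set.Ioo (-π) π, ENNReal.ofReal ((Δ / 2) ^ 2) ≤ angK Δ := by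
    have := continuous_wt.measurable
    refine setLIntegral_mono (by fun_prop) fun θ _ => ENNReal.ofReal_le_ofReal ?_
    have hw := wt_ge_one θ
    have hw2 := wt_le_two θ
    gcongr
  intro h0
  rw [h0, setLIntegral_const, Real.volume_Ioo, nonpos_iff_eq_zero, mul_eq_zero] at h
  simp only [ENNReal.ofReal_eq_zero] at h
  have := Real.pi_pos
  have : 0 < (Δ/2)^2 := by positivity
  rcases h with h | h <;> linarith

lemma radial_l1 {Δ : ℝ} (hΔ : 0 < Δ) (φ : ℝ → ℝ≥0∞) (hφ : Measurable φ) :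
    ∫⁻ x, φ (l1 x) = angK Δ * ∫⁻ r in Set.Ici (0:ℝ), ENNReal.ofReal r * φ (r * Δ) := by
  have h := polar_l1 hΔ (fun x => φ (l1 x)) (hφ.comp continuous_l1.measurable)
  rw [h, angK, ← lintegral_mul_const'']
  · refine lintegral_congr fun θ => ?_
    congr 1
    refine setLIntegral_congr_fun measurableSet_Ici fun r hr => ?_
    rw [l1_smul, l1_dirv hΔ, abs_of_nonneg hr]
  · have := continuous_wt.measurable
    fun_prop

lemma floor_fact {i k : ℕ} (hk : k ≤ i) (hi : 0 < i) (j : ℕ) {x : ℝ} (hx0 : 0 ≤ x) (hx1 : x < 1) :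
    (⌊(x + j) * i⌋₊ + (i - k)) / i = j + if x < (k:ℝ) / i then 0 else 1 := by
  have hi' : (0:ℝ) < i := by exact_mod_cast hi
  have e : (x + j) * i = x * i + ((j * i : ℕ) : ℝ) := by push_cast; ring
  rw [e, Nat.floor_add_natCast (by positivity)]
  set n := ⌊x * i⌋₊ with hn
  have hni : n < i := by
    rw [hn, Nat.floor_lt (by positivity)]
    nlinarith
  have hnk : n < k ↔ x < (k:ℝ) / i := by
    rw [hn, Nat.floor_lt (by positivity), lt_div_iff₀ hi']
  by_cases h : n < k
  · rw [if_pos (hnk.mp h)]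
    have : n + j * i + (i - k) = (n + (i - k)) + j * i := by ring
    rw [this, Nat.add_mul_div_right _ _ hi, Nat.div_eq_of_lt (by omega)]
    omega
  · rw [if_neg (fun h' => h (hnk.mpr h'))]
    have : n + j * i + (i - k) = (n - k) + (j + 1) * i := by
      rw [add_mul]; omega
    rw [this, Nat.add_mul_div_right _ _ hi, Nat.div_eq_of_lt (by omega)]
    omega

/-- The staircase density sequence. -/
def stseq (b : ℝ) (i k : ℕ) (j : ℕ) : ℝ≥0∞ := ENNReal.ofReal (b ^ ((j + (i - k)) / i))

lemma measurable_layerIdx (Δ : ℝ) (i : ℕ) : Measurable (layerIdx Δ i) := by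
  unfold layerIdx
  have := continuous_l1.measurable
  exact Nat.measurable_floor.comp (by fun_prop)

lemma layerIdx_add_le {Δ : ℝ} (hΔ : 0 < Δ) (i : ℕ) (x t : ℝ × ℝ) (ht : l1 t ≤ Δ) :
    layerIdx Δ i (x + t) ≤ layerIdx Δ i x + i := by
  unfold layerIdx
  have h0 : 0 ≤ l1 x * i / Δ := by have := l1_nonneg x; positivity
  rw [← Nat.floor_add_natCast h0]
  apply Nat.floor_le_floor
  rw [div_add' _ _ _ hΔ.ne']
  gcongr
  have := l1_add x t
  have : (0:ℝ) ≤ i := Nat.cast_nonneg i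
  nlinarith

lemma dpc_of_seq {ε Δ : ℝ} (hΔ : 0 < Δ) (i : ℕ) (a : ℕ → ℝ≥0∞) (ha : Antitone a)
    (hp : ∀ k : ℕ, a k = ENNReal.ofReal (Real.exp ε) * a (k + i)) :
    DPC ε Δ (volume.withDensity (fun x => a (layerIdx Δ i x))) := by
  intro S hS t ht
  have hm : Measurable (fun x => a (layerIdx Δ i x)) :=
    (measurable_from_nat (f := a)).comp (measurable_layerIdx Δ i)
  have himg : (fun x : ℝ × ℝ => x + t) '' S = (fun x => x + (-t)) ⁻¹' S := by
    ext y
    constructor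
    · rintro ⟨x, hx, rfl⟩; simpa using hx
    · intro hy; exact ⟨y + -t, hy, by simp⟩
  have hS' : MeasurableSet ((fun x : ℝ × ℝ => x + t) '' S) := by
    rw [himg]; exact (measurable_add_const _) hS
  rw [withDensity_apply _ hS, withDensity_apply _ hS']
  have hmp : MeasurePreserving (fun x : ℝ × ℝ => x + t) volume volume :=
    measurePreserving_add_right volume t
  rw [← hmp.setLIntegral_comp_preimage hS' hm,
    Set.preimage_image_eq _ (fun p q hpq => add_right_cancel hpq), ← lintegral_const_mul' _ _ ENNReal.ofReal_ne_top]
  refine lintegral_mono fun x => ?_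
  dsimp only
  rw [hp]
  gcongr
  exact ha (layerIdx_add_le hΔ i x t ht)

lemma memPd_norm {ε Δ : ℝ} (hΔ : 0 < Δ) {i k : ℕ} (a : ℕ → ℝ≥0∞) (b : ℝ) {M : ℝ≥0∞}
    (hmD : Measurable (fun x => a (layerIdx Δ i x)))
    (hM0 : ∫⁻ x, a (layerIdx Δ i x) ≠ 0) (hMtop : ∫⁻ x, a (layerIdx Δ i x) ≠ ⊤)
    (ha_anti : Antitone a)
    (ha_per : ∀ j, a j = ENNReal.ofReal (Real.exp ε) * a (j + i))
    (heb : ENNReal.ofReal (Real.exp ε) * ENNReal.ofReal b = 1) (hi : 0 < i)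
    (hk1 : 1 ≤ k) (hk2 : k ≤ i - 2) (ha0 : ∀ j, j < k → a j = 1)
    (ha1 : ∀ j, k ≤ j → j ≤ i - 1 → a j = ENNReal.ofReal b)
    (hM : M = ∫⁻ x, a (layerIdx Δ i x)) :
    MemPd ε Δ i (volume.withDensity (fun x => M⁻¹ * a (layerIdx Δ i x))) := by
  rw [← hM] at hM0 hMtop
  have hanti : Antitone (fun j => M⁻¹ * a j) := fun m n hmn => by
    dsimp only
    gcongr
    exact ha_anti hmn
  have hper : ∀ j, M⁻¹ * a j = ENNReal.ofReal (Real.exp ε) * (M⁻¹ * a (j + i)) := by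
    intro j; rw [ha_per j]; ring
  refine ⟨⟨⟨?_⟩, dpc_of_seq hΔ i (fun j => M⁻¹ * a j) hanti hper⟩,
    fun j => M⁻¹ * a j, rfl, hanti, hper, ?_, ?_, ?_⟩
  · rw [withDensity_apply _ MeasurableSet.univ, Measure.restrict_univ,
      lintegral_const_mul _ hmD, ← hM]
    exact ENNReal.inv_mul_cancel hM0 hMtop
  · dsimp only
    rw [ha0 0 (by omega), ha1 (i-1) (by omega) le_rfl, mul_left_comm, heb]
  · exact ⟨0, by omega, fun j hj => by rw [Nat.le_zero.mp hj]⟩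
  · refine ⟨k, hk1, hk2, fun j hj => ?_, fun j hj hj' => ?_⟩
    · dsimp only; rw [ha0 0 (by omega), ha0 j hj]
    · dsimp only; rw [ha1 (i-1) (by omega) le_rfl, ha1 j hj.le hj']

set_option maxHeartbeats 1000000 in
lemma stair_ineq {ε Δ V : ℝ} (hε : 0 < ε) (hΔ : 0 < Δ) (hV : 0 ≤ V)
    (hopt : ∀ μ : Measure (ℝ × ℝ), (∃ i : ℕ, 3 ≤ i ∧ MemPd ε Δ i μ) → ENNReal.ofReal V ≤ cost μ)
    (i k : ℕ) (hi : 3 ≤ i) (hk1 : 1 ≤ k) (hk2 : k ≤ i - 2) :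
    ∫⁻ x in Set.Ico (0:ℝ) 1,
        ENNReal.ofReal (gs (Real.exp (-ε)) ((k:ℝ)/i) x * (V / Δ * gT1 (Real.exp (-ε)) x))
      ≤ ∫⁻ x in Set.Ico (0:ℝ) 1,
        ENNReal.ofReal (gs (Real.exp (-ε)) ((k:ℝ)/i) x * gT2 (Real.exp (-ε)) x) := by
  set b := Real.exp (-ε) with hb
  have hb0 : 0 < b := Real.exp_pos _
  have hb1 : b < 1 := by rw [hb, Real.exp_lt_one_iff]; linarith
  set γ := (k:ℝ)/i with hγ
  set a := stseq b i k with ha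
  have ha_anti : Antitone a := by
    intro m n hmn
    apply ENNReal.ofReal_le_ofReal
    apply pow_le_pow_of_le_one hb0.le hb1.le
    exact Nat.div_le_div_right (by omega)
  have heb : ENNReal.ofReal (Real.exp ε) * ENNReal.ofReal b = 1 := by
    rw [← ENNReal.ofReal_mul (Real.exp_pos _).le, hb, ← Real.exp_add]; simp
  have ha_per : ∀ j, a j = ENNReal.ofReal (Real.exp ε) * a (j + i) := by
    intro j
    simp only [ha, stseq]
    rw [show j + i + (i - k) = j + (i - k) + i by ring, Nat.add_div_right _ (by omega), pow_succ,
      ENNReal.ofReal_mul (by positivity), mul_left_comm, heb, mul_one]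
  have ha0 : ∀ j, j < k → a j = 1 := by
    intro j hj
    simp only [ha, stseq]
    rw [Nat.div_eq_of_lt (by omega)]; simp
  have ha1 : ∀ j, k ≤ j → j ≤ i - 1 → a j = ENNReal.ofReal b := by
    intro j hj hj'
    simp only [ha, stseq]
    rw [show j + (i - k) = (j - k) + i by omega, Nat.add_div_right _ (by omega),
      Nat.div_eq_of_lt (by omega)]; simp
  -- values on residues
  have hval : ∀ x ∈ Set.Ico (0:ℝ) 1, ∀ j : ℕ,
      a ⌊(x + j) * i⌋₊ = ENNReal.ofReal (b ^ j * gs b γ x) := by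
    rintro x ⟨hx0, hx1⟩ j
    simp only [ha, stseq]
    rw [floor_fact (by omega) (by omega) j hx0 hx1, gs]
    split_ifs <;> simp [pow_succ]
  have hma : Measurable (fun r : ℝ => a ⌊r * i⌋₊) :=
    (measurable_from_nat (f := a)).comp (Nat.measurable_floor.comp (by fun_prop))
  have hma' : Measurable (fun r : ℝ => a ⌊r * i / Δ⌋₊) :=
    (measurable_from_nat (f := a)).comp (Nat.measurable_floor.comp (by fun_prop))
  have I1 : ∫⁻ r in Set.Ici (0:ℝ), ENNReal.ofReal r * a ⌊r * i⌋₊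
      = ∫⁻ x in Set.Ico (0:ℝ) 1, ENNReal.ofReal (gs b γ x * gT1 b x) := by
    rw [lintegral_unfold _ (by fun_prop)]
    refine setLIntegral_congr_fun measurableSet_Ico fun x hx => ?_
    have hx0 := hx.1
    have hgs := gs_nonneg hb0 γ x
    have h := (hasSum_T1 hb0 hb1 x).mul_left (gs b γ x)
    rw [← h.tsum_eq, ENNReal.ofReal_tsum_of_nonneg (fun k => by positivity) h.summable]
    refine tsum_congr fun j => ?_
    rw [hval x hx j, ← ENNReal.ofReal_mul (by positivity)]
    congr 1; ring
  have I2 : ∫⁻ r in Set.Ici (0:ℝ), ENNReal.ofReal r * (ENNReal.ofReal r * a ⌊r * i⌋₊)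
      = ∫⁻ x in Set.Ico (0:ℝ) 1, ENNReal.ofReal (gs b γ x * gT2 b x) := by
    rw [lintegral_unfold _ (by fun_prop)]
    refine setLIntegral_congr_fun measurableSet_Ico fun x hx => ?_
    have hx0 := hx.1
    have hgs := gs_nonneg hb0 γ x
    have h := (hasSum_T2 hb0 hb1 x).mul_left (gs b γ x)
    rw [← h.tsum_eq, ENNReal.ofReal_tsum_of_nonneg (fun k => by positivity) h.summable]
    refine tsum_congr fun j => ?_
    rw [hval x hx j, ← ENNReal.ofReal_mul (by positivity), ← ENNReal.ofReal_mul (by positivity)]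
    congr 1; ring
  set M := ∫⁻ x, a (layerIdx Δ i x) with hM
  have hM1 : M = angK Δ * ∫⁻ x in Set.Ico (0:ℝ) 1, ENNReal.ofReal (gs b γ x * gT1 b x) := by
    have h := radial_l1 hΔ (fun r => a ⌊r * i / Δ⌋₊) hma'
    rw [hM, ← I1]
    refine h.trans ?_
    congr 1
    refine lintegral_congr fun r => ?_
    rw [show r * Δ * i / Δ = r * i by field_simp]
  have hP : ∫⁻ x, ENNReal.ofReal (l1 x) * a (layerIdx Δ i x) = angK Δ *
      (ENNReal.ofReal Δ * ∫⁻ x in Set.Ico (0:ℝ) 1, ENNReal.ofReal (gs b γ x * gT2 b x)) := by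
    have h := radial_l1 hΔ (fun r => ENNReal.ofReal r * a ⌊r * i / Δ⌋₊) (by fun_prop)
    rw [← I2]
    refine h.trans ?_
    congr 1
    rw [← lintegral_const_mul' _ _ ENNReal.ofReal_ne_top]
    refine lintegral_congr fun r => ?_
    rw [show r * Δ * i / Δ = r * i by field_simp, ENNReal.ofReal_mul' hΔ.le]
    ring
  have hMtop : M ≠ ⊤ := by
    rw [hM1]
    refine ENNReal.mul_ne_top (angK_ne_top hΔ) ?_
    have hbd : ∫⁻ x in Set.Ico (0:ℝ) 1, ENNReal.ofReal (gs b γ x * gT1 b x) ≤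
        ∫⁻ x in Set.Ico (0:ℝ) 1, ENNReal.ofReal (gT1 b 1) := by
      refine setLIntegral_mono measurable_const fun x hx => ?_
      apply ENNReal.ofReal_le_ofReal
      have t2 := gT1_nonneg hb0 hb1 hx.1
      have t21 : gT1 b x ≤ gT1 b 1 := by
        refine hasSum_le (fun k => ?_) (hasSum_T1 hb0 hb1 x) (hasSum_T1 hb0 hb1 1)
        have := hx.1
        have := hx.2.le
        gcongr
      have := gs_le_one hb1 γ x
      have := gs_nonneg hb0 γ x
      calc gs b γ x * gT1 b x ≤ 1 * gT1 b 1 := by gcongr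
        _ = _ := by ring
    refine ne_top_of_le_ne_top ?_ hbd
    rw [setLIntegral_const]
    simp
  have hmD : Measurable (fun x => a (layerIdx Δ i x)) :=
    (measurable_from_nat (f := a)).comp (measurable_layerIdx Δ i)
  have hM0 : M ≠ 0 := by
    intro h0
    rw [hM, lintegral_eq_zero_iff hmD] at h0
    have hpos : ∀ j, a j ≠ 0 := by
      intro j
      simp only [ha, stseq, ne_eq, ENNReal.ofReal_eq_zero, not_le]
      positivity
    have : ∀ᵐ x : ℝ × ℝ, False := by
      filter_upwards [h0] with x hx
      exact hpos _ hx
    obtain ⟨_, h⟩ := this.exists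
    exact h
  have hmem : MemPd ε Δ i
      (volume.withDensity (fun x => M⁻¹ * a (layerIdx Δ i x))) := by
    exact memPd_norm hΔ a b hmD hM0 hMtop ha_anti ha_per heb (by omega) hk1 hk2 ha0 ha1 hM
  have hle := hopt _ ⟨i, hi, hmem⟩
  have hml := continuous_l1.measurable
  rw [cost, lintegral_withDensity_eq_lintegral_mul _ (hmD.const_mul _) hml.ennreal_ofReal] at hle
  have e3 : ∫⁻ x, ((fun x => M⁻¹ * a (layerIdx Δ i x)) *
      (fun x => ENNReal.ofReal (l1 x))) x
      = M⁻¹ * ∫⁻ x, ENNReal.ofReal (l1 x) * a (layerIdx Δ i x) := by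
    rw [← lintegral_const_mul' _ _ (ENNReal.inv_ne_top.mpr hM0)]
    refine lintegral_congr fun x => ?_
    simp only [Pi.mul_apply]
    ring
  rw [e3, mul_comm M⁻¹, ← div_eq_mul_inv, ENNReal.le_div_iff_mul_le (Or.inl hM0) (Or.inl hMtop),
    hM1, hP, mul_left_comm,
    ENNReal.mul_le_mul_iff_right (angK_ne_zero hΔ) (angK_ne_top hΔ)] at hle
  have hm1 := (continuous_gT1 b).measurable
  have hm2 := measurable_gs b γ
  have e4 : ENNReal.ofReal V = ENNReal.ofReal Δ * ENNReal.ofReal (V / Δ) := by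
    rw [← ENNReal.ofReal_mul hΔ.le]; congr 1; field_simp
  rw [e4, mul_assoc, ENNReal.mul_le_mul_iff_right (by simpa using hΔ) ENNReal.ofReal_ne_top,
    ← lintegral_const_mul _ (by fun_prop)] at hle
  refine le_trans (le_of_eq ?_) hle
  refine lintegral_congr fun x => ?_
  rw [← ENNReal.ofReal_mul (by positivity)]
  congr 1; ring

lemma gs_lintegral {b : ℝ} (hb0 : 0 < b) {γ : ℝ} (hγ0 : 0 ≤ γ) (hγ1 : γ ≤ 1) {T : ℝ → ℝ}
    (hT : Continuous T) (hT0 : ∀ x, 0 ≤ x → 0 ≤ T x) :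
    ∫⁻ x in Set.Ico (0:ℝ) 1, ENNReal.ofReal (gs b γ x * T x)
      = ENNReal.ofReal (b * (∫ x in (0:ℝ)..1, T x) + (1 - b) * ∫ x in (0:ℝ)..γ, T x) := by
  have hTi : IntegrableOn T (Set.Ico 0 1) :=
    (hT.integrableOn_Icc (a := 0) (b := 1)).mono_set Set.Ico_subset_Icc_self
  have hind : Integrable ((Set.Iio γ).indicator T) (volume.restrict (Set.Ico 0 1)) :=
    Integrable.indicator hTi measurableSet_Iio
  have e : ∀ x, gs b γ x * T x = b * T x + (1 - b) * (Set.Iio γ).indicator T x := by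
    intro x
    by_cases h : x < γ
    · rw [gs, if_pos h, Set.indicator_of_mem (by exact h)]; ring
    · rw [gs, if_neg h, Set.indicator_of_notMem (by exact h)]; ring
  have hgsI : Integrable (fun x => gs b γ x * T x) (volume.restrict (Set.Ico 0 1)) := by
    simp only [e]
    exact (hTi.const_mul b).add (hind.const_mul _)
  rw [← ofReal_integral_eq_lintegral_ofReal hgsI]
  · congr 1
    simp only [e]
    rw [integral_add (hTi.const_mul b) (hind.const_mul _), integral_const_mul, integral_const_mul,
      setIntegral_indicator measurableSet_Iio,
      intervalIntegral.integral_of_le zero_le_one, intervalIntegral.integral_of_le hγ0,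
      integral_Ico_eq_integral_Ioc]
    have : Set.Ico (0:ℝ) 1 ∩ Set.Iio γ = Set.Ico 0 γ := by
      ext x
      simp only [Set.mem_inter_iff, Set.mem_Ico, Set.mem_Iio]
      constructor
      · rintro ⟨⟨h1, _⟩, h2⟩; exact ⟨h1, h2⟩
      · rintro ⟨h1, h2⟩; exact ⟨⟨h1, by linarith⟩, h2⟩
    rw [this, integral_Ico_eq_integral_Ioc]
  · refine (ae_restrict_iff' measurableSet_Ico).mpr (ae_of_all _ fun x hx => ?_)
    exact mul_nonneg (gs_nonneg hb0 _ _) (hT0 x hx.1)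

lemma stair_all {b V : ℝ} (hb0 : 0 < b) (hb1 : b < 1) (hV : 0 ≤ V)
    (h : ∀ i k : ℕ, 3 ≤ i → 1 ≤ k → k ≤ i - 2 →
      ∫⁻ x in Set.Ico (0:ℝ) 1, ENNReal.ofReal (gs b ((k:ℝ)/i) x * (V * gT1 b x))
        ≤ ∫⁻ x in Set.Ico (0:ℝ) 1, ENNReal.ofReal (gs b ((k:ℝ)/i) x * gT2 b x)) :
    ∀ γ, 0 ≤ γ → γ ≤ 1 →
      ∫⁻ x in Set.Ico (0:ℝ) 1, ENNReal.ofReal (gs b γ x * (V * gT1 b x))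
        ≤ ∫⁻ x in Set.Ico (0:ℝ) 1, ENNReal.ofReal (gs b γ x * gT2 b x) := by
  have c1 : Continuous (fun x => V * gT1 b x) := continuous_const.mul (continuous_gT1 b)
  have c2 := continuous_gT2 b
  have n1 : ∀ x, 0 ≤ x → 0 ≤ V * gT1 b x := fun x hx => mul_nonneg hV (gT1_nonneg hb0 hb1 hx)
  have n2 : ∀ x, 0 ≤ x → 0 ≤ gT2 b x := fun x hx => gT2_nonneg hb0 hb1 hx
  intro γ h0 h1
  rw [gs_lintegral hb0 h0 h1 c1 n1, gs_lintegral hb0 h0 h1 c2 n2]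
  set Φ1 : ℝ → ℝ := fun γ => b * (∫ x in (0:ℝ)..1, V * gT1 b x) +
    (1 - b) * ∫ x in (0:ℝ)..γ, V * gT1 b x with hΦ1
  set Φ2 : ℝ → ℝ := fun γ => b * (∫ x in (0:ℝ)..1, gT2 b x) +
    (1 - b) * ∫ x in (0:ℝ)..γ, gT2 b x with hΦ2
  have d1 : Continuous Φ1 := continuous_const.add (continuous_const.mul
    (intervalIntegral.continuous_primitive (fun _ _ => c1.intervalIntegrable _ _) 0))
  have d2 : Continuous Φ2 := continuous_const.add (continuous_const.mul
    (intervalIntegral.continuous_primitive (fun _ _ => c2.intervalIntegrable _ _) 0))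
  let K : ℕ → ℕ := fun n => min (max 1 ⌊γ * (n + 4 : ℕ)⌋₊) (n + 2)
  have hK : Tendsto (fun n : ℕ => (K n : ℝ) / (n + 4 : ℕ)) atTop (𝓝 γ) := by
    have t : Tendsto (fun n : ℕ => (1:ℝ) / (n + 4 : ℕ)) atTop (𝓝 0) :=
      (tendsto_one_div_atTop_nhds_zero_nat (𝕜 := ℝ)).comp (tendsto_add_atTop_nat 4)
    have tl : Tendsto (fun n : ℕ => γ - 2 * ((1:ℝ) / (n + 4 : ℕ))) atTop (𝓝 γ) := by
      simpa using tendsto_const_nhds.sub (t.const_mul 2)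
    have tu : Tendsto (fun n : ℕ => γ + ((1:ℝ) / (n + 4 : ℕ))) atTop (𝓝 γ) := by
      simpa using tendsto_const_nhds.add t
    refine tendsto_of_tendsto_of_tendsto_of_le_of_le tl tu (fun n => ?_) (fun n => ?_)
    · have hp : (0:ℝ) < (n + 4 : ℕ) := by positivity
      have : γ - 2 * ((1:ℝ) / (n + 4 : ℕ)) = (γ * (n + 4 : ℕ) - 2) / (n + 4 : ℕ) := by
        field_simp
      dsimp only
      rw [this]
      gcongr
      simp only [K, Nat.cast_min, Nat.cast_max]
      refine le_min (le_max_of_le_right ?_) ?_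
      · have := Nat.lt_floor_add_one (γ * (n + 4 : ℕ)); linarith
      · push_cast at hp ⊢; nlinarith
    · have hp : (0:ℝ) < (n + 4 : ℕ) := by positivity
      have : γ + ((1:ℝ) / (n + 4 : ℕ)) = (γ * (n + 4 : ℕ) + 1) / (n + 4 : ℕ) := by
        field_simp
      dsimp only
      rw [this]
      gcongr
      simp only [K, Nat.cast_min, Nat.cast_max]
      refine (min_le_left _ _).trans (max_le ?_ ?_)
      · push_cast at hp ⊢; nlinarith
      · have := Nat.floor_le (a := γ * (n + 4 : ℕ)) (by positivity); linarith
  refine le_of_tendsto_of_tendsto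
    ((ENNReal.continuous_ofReal.comp d1).continuousAt.tendsto.comp hK)
    ((ENNReal.continuous_ofReal.comp d2).continuousAt.tendsto.comp hK)
    (Eventually.of_forall fun n => ?_)
  have hK1 : 1 ≤ K n := le_min (le_max_left _ _) (by omega)
  have hK2 : K n ≤ n + 2 := min_le_right _ _
  have hh := h (n + 4) (K n) (by omega) hK1 (by omega)
  have q0 : 0 ≤ (K n : ℝ) / (n + 4 : ℕ) := by positivity
  have q1 : (K n : ℝ) / (n + 4 : ℕ) ≤ 1 := by
    apply div_le_one_of_le₀ _ (by positivity)
    exact_mod_cast (by omega : K n ≤ n + 4)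
  rw [gs_lintegral hb0 q0 q1 c1 n1, gs_lintegral hb0 q0 q1 c2 n2] at hh
  exact hh

/-- The plane inequality for pointwise private densities. -/
lemma plane_ineq {ε Δ V : ℝ} (hε : 0 < ε) (hΔ : 0 < Δ) (hV : 0 ≤ V)
    (hst : ∀ γ, 0 ≤ γ → γ ≤ 1 →
      ∫⁻ x in Set.Ico (0:ℝ) 1,
        ENNReal.ofReal (gs (Real.exp (-ε)) γ x * (V / Δ * gT1 (Real.exp (-ε)) x))
      ≤ ∫⁻ x in Set.Ico (0:ℝ) 1,
        ENNReal.ofReal (gs (Real.exp (-ε)) γ x * gT2 (Real.exp (-ε)) x))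
    (f : ℝ × ℝ → ℝ) (hf : Measurable f) (hf0 : ∀ x, 0 ≤ f x)
    (hdp : ∀ x t, l1 t ≤ Δ → f x ≤ Real.exp ε * f (x + t)) :
    ENNReal.ofReal V * ∫⁻ x, ENNReal.ofReal (f x)
      ≤ ∫⁻ x, ENNReal.ofReal (l1 x) * ENNReal.ofReal (f x) := by
  have hml := continuous_l1.measurable
  rw [polar_l1 hΔ _ (by fun_prop), polar_l1 hΔ _ (by fun_prop),
    ← lintegral_const_mul' _ _ ENNReal.ofReal_ne_top]
  refine lintegral_mono fun θ => ?_
  dsimp only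
  rw [mul_left_comm]
  gcongr ENNReal.ofReal ((Δ / wt θ) ^ 2) * ?_
  have h := ray_ineq (b := Real.exp (-ε)) (V := V / Δ) (Real.exp_pos _)
    (by rw [Real.exp_lt_one_iff]; linarith) (by positivity) hst
    (g := fun r => f (r • dirv Δ θ)) (by fun_prop) (fun r => hf0 _) (by
      intro r s hr hs hrs
      have h1 := hdp (r • dirv Δ θ) ((s - r) • dirv Δ θ) (by
        rw [l1_smul, l1_dirv hΔ, abs_sub_comm]
        nlinarith)
      rw [← add_smul, add_sub_cancel] at h1
      have h2 : Real.exp (-ε) * Real.exp ε = 1 := by rw [← Real.exp_add]; simp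
      calc Real.exp (-ε) * f (r • dirv Δ θ)
          ≤ Real.exp (-ε) * (Real.exp ε * f (s • dirv Δ θ)) := by gcongr
        _ = f (s • dirv Δ θ) := by rw [← mul_assoc, h2, one_mul])
  have e4 : ENNReal.ofReal V = ENNReal.ofReal Δ * ENNReal.ofReal (V / Δ) := by
    rw [← ENNReal.ofReal_mul hΔ.le]; congr 1; field_simp
  have e5 : ∫⁻ r in Set.Ici (0:ℝ), ENNReal.ofReal r * ENNReal.ofReal (f (r • dirv Δ θ))
      = ∫⁻ r in Set.Ici (0:ℝ), ENNReal.ofReal (r * f (r • dirv Δ θ)) :=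
    setLIntegral_congr_fun measurableSet_Ici fun r hr => (ENNReal.ofReal_mul hr).symm
  have e6 : ∫⁻ r in Set.Ici (0:ℝ), ENNReal.ofReal r *
      (ENNReal.ofReal (l1 (r • dirv Δ θ)) * ENNReal.ofReal (f (r • dirv Δ θ)))
      = ENNReal.ofReal Δ * ∫⁻ r in Set.Ici (0:ℝ), ENNReal.ofReal (r ^ 2 * f (r • dirv Δ θ)) := by
    rw [← lintegral_const_mul' _ _ ENNReal.ofReal_ne_top]
    refine setLIntegral_congr_fun measurableSet_Ici fun r hr => ?_
    have hr' : (0:ℝ) ≤ r := hr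
    rw [l1_smul, l1_dirv hΔ, abs_of_nonneg hr', ← ENNReal.ofReal_mul (by positivity),
      ← ENNReal.ofReal_mul hr', ← ENNReal.ofReal_mul hΔ.le]
    congr 1; ring
  rw [e4, e5, e6, mul_assoc]
  gcongr

lemma lower_bound {ε Δ V : ℝ} (hV : 0 ≤ V)
    (hpl : ∀ f : ℝ × ℝ → ℝ, Measurable f → (∀ x, 0 ≤ f x) →
      (∀ x t, l1 t ≤ Δ → f x ≤ Real.exp ε * f (x + t)) →
      ENNReal.ofReal V * ∫⁻ x, ENNReal.ofReal (f x)
        ≤ ∫⁻ x, ENNReal.ofReal (l1 x) * ENNReal.ofReal (f x))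
    (μ : Measure (ℝ × ℝ)) (hμ : MemP ε Δ μ) : ENNReal.ofReal V ≤ cost μ := by
  obtain ⟨hprob, hdp⟩ := hμ
  have hml := continuous_l1.measurable
  refine ENNReal.le_of_forall_pos_le_add fun η hη _ => ?_
  set δ : ℝ := η / 2 with hδ
  have hδ0 : 0 < δ := by have : (0:ℝ) < η := hη
                         positivity
  have hset : MeasurableSet {p : (ℝ × ℝ) × (ℝ × ℝ) | dist p.2 p.1 ≤ δ} :=
    measurableSet_le (by fun_prop) measurable_const
  have hF : Measurable (fun x : ℝ × ℝ => μ (Metric.closedBall x δ)) :=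
    measurable_measure_prodMk_left (ν := μ) hset
  set v := volume (Metric.closedBall (0 : ℝ × ℝ) δ) with hv
  have hv0 : v ≠ 0 := (Metric.measure_closedBall_pos volume _ hδ0).ne'
  have hvt : v ≠ ⊤ := (isCompact_closedBall _ _).measure_lt_top.ne
  have hvx : ∀ y : ℝ × ℝ, volume (Metric.closedBall y δ) = v := fun y =>
    Measure.addHaar_closedBall_center volume y δ
  have key : ∀ u : ℝ × ℝ → ℝ≥0∞, Measurable u → ∫⁻ x, u x * μ (Metric.closedBall x δ)
      = ∫⁻ y, (∫⁻ x in Metric.closedBall y δ, u x) ∂μ := by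
    intro u hu
    have e1 : ∀ x : ℝ × ℝ, u x * μ (Metric.closedBall x δ)
        = ∫⁻ y, {p : (ℝ × ℝ) × (ℝ × ℝ) | dist p.2 p.1 ≤ δ}.indicator (fun p => u p.1) (x, y) ∂μ := by
      intro x
      rw [← lintegral_indicator_const Metric.isClosed_closedBall.measurableSet]
      refine lintegral_congr fun y => ?_
      by_cases h : dist y x ≤ δ
      · rw [Set.indicator_of_mem (Metric.mem_closedBall.mpr h), Set.indicator_of_mem (by exact h)]
      · rw [Set.indicator_of_notMem (fun h' => h (Metric.mem_closedBall.mp h')),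
          Set.indicator_of_notMem (by exact h)]
    simp only [e1]
    rw [lintegral_lintegral_swap]
    · refine lintegral_congr fun y => ?_
      rw [← lintegral_indicator Metric.isClosed_closedBall.measurableSet]
      refine lintegral_congr fun x => ?_
      by_cases h : dist y x ≤ δ
      · rw [Set.indicator_of_mem (by exact h), Set.indicator_of_mem (Metric.mem_closedBall'.mpr h)]
      · rw [Set.indicator_of_notMem (by exact h),
          Set.indicator_of_notMem (fun h' => h (Metric.mem_closedBall'.mp h'))]
    · exact (Measurable.indicator (hu.comp measurable_fst) hset).aemeasurable
  have hof : ∀ x : ℝ × ℝ, ENNReal.ofReal (μ (Metric.closedBall x δ)).toReal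
      = μ (Metric.closedBall x δ) := fun x => ENNReal.ofReal_toReal (measure_ne_top _ _)
  have hmain := hpl (fun x => (μ (Metric.closedBall x δ)).toReal) hF.ennreal_toReal
    (fun x => ENNReal.toReal_nonneg) (by
      intro x t ht
      have h := hdp (Metric.closedBall x δ) Metric.isClosed_closedBall.measurableSet t ht
      have himg : (fun z : ℝ × ℝ => z + t) '' Metric.closedBall x δ = Metric.closedBall (x + t) δ := by
        ext y
        simp only [Set.mem_image, Metric.mem_closedBall]
        constructor
        · rintro ⟨z, hz, rfl⟩; simpa using hz
        · intro hy
          refine ⟨y - t, ?_, by simp⟩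
          rw [← dist_add_right (y - t) x t]; simpa using hy
      rw [himg] at h
      have h2 := ENNReal.toReal_mono
        (ENNReal.mul_ne_top ENNReal.ofReal_ne_top (measure_ne_top _ _)) h
      rwa [ENNReal.toReal_mul, ENNReal.toReal_ofReal (Real.exp_pos _).le] at h2)
  simp only [hof] at hmain
  have m1 : ∫⁻ x : ℝ × ℝ, μ (Metric.closedBall x δ) = v := by
    have := key (fun _ => 1) measurable_const
    simp only [one_mul, lintegral_const, Measure.restrict_apply MeasurableSet.univ,
      Set.univ_inter, hvx, measure_univ, mul_one] at this
    exact this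
  have m2 : ∫⁻ x : ℝ × ℝ, ENNReal.ofReal (l1 x) * μ (Metric.closedBall x δ)
      ≤ (cost μ + η) * v := by
    rw [key _ hml.ennreal_ofReal]
    have : ∀ y : ℝ × ℝ, ∫⁻ x in Metric.closedBall y δ, ENNReal.ofReal (l1 x)
        ≤ (ENNReal.ofReal (l1 y) + η) * v := by
      intro y
      calc ∫⁻ x in Metric.closedBall y δ, ENNReal.ofReal (l1 x)
          ≤ ∫⁻ x in Metric.closedBall y δ, (ENNReal.ofReal (l1 y) + η) := by
            refine setLIntegral_mono measurable_const fun x hx => ?_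
            rw [← ENNReal.ofReal_coe_nnreal, ← ENNReal.ofReal_add (l1_nonneg y) η.coe_nonneg]
            apply ENNReal.ofReal_le_ofReal
            have h1 := l1_add y (x - y)
            rw [add_sub_cancel] at h1
            have h2 : l1 (x - y) ≤ 2 * δ := by
              rw [Metric.mem_closedBall, dist_eq_norm, Prod.norm_def] at hx
              have a1 := (le_max_left _ _).trans hx
              have a2 := (le_max_right _ _).trans hx
              rw [Real.norm_eq_abs] at a1 a2
              unfold l1
              linarith
            have h3 : 2 * δ = η := by rw [hδ]; ring
            linarith
        _ = _ := by rw [setLIntegral_const, hvx]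
    calc _ ≤ ∫⁻ y, (ENNReal.ofReal (l1 y) + η) * v ∂μ := lintegral_mono this
      _ = _ := by
        rw [lintegral_mul_const' _ _ hvt, lintegral_add_right _ measurable_const, lintegral_const,
          measure_univ, mul_one, cost]
  rw [m1] at hmain
  exact (ENNReal.mul_le_mul_iff_left hv0 hvt).mp (hmain.trans m2)

/-- Lemma 9: the optimal cost V* equals the infimum over measures in 𝒫_i^{(d)},
i ≥ 3: two-valued staircase-shaped density sequences on each period. -/
theorem Vstar_eq_inf_Pd (ε Δ : ℝ) (hε : 0 < ε) (hΔ : 0 < Δ) :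
    (⨅ (μ : Measure (ℝ × ℝ)) (_ : MemP ε Δ μ), cost μ) =
    ⨅ (μ : Measure (ℝ × ℝ)) (_ : ∃ i : ℕ, 3 ≤ i ∧ MemPd ε Δ i μ), cost μ := by
  apply le_antisymm
  · refine le_iInf₂ fun μ hμ => ?_
    obtain ⟨i, _, h⟩ := hμ
    exact iInf₂_le μ h.1
  · refine ENNReal.le_of_forall_nnreal_lt fun V hVlt => ?_
    have hV : (0:ℝ) ≤ V := V.2
    rw [← ENNReal.ofReal_coe_nnreal] at hVlt ⊢
    have hopt : ∀ μ : Measure (ℝ × ℝ), (∃ i : ℕ, 3 ≤ i ∧ MemPd ε Δ i μ) →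
        ENNReal.ofReal V ≤ cost μ := fun μ hμ => hVlt.le.trans (iInf₂_le μ hμ)
    have hst := stair_all (b := Real.exp (-ε)) (V := V / Δ) (Real.exp_pos _)
      (by rw [Real.exp_lt_one_iff]; linarith) (by positivity)
      (fun i k hi hk1 hk2 => stair_ineq hε hΔ hV hopt i k hi hk1 hk2)
    refine le_iInf₂ fun μ hμ => ?_
    exact lower_bound hV (fun f hf hf0 hdp => plane_ineq hε hΔ hV hst f hf hf0 hdp) μ hμ
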